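/- Let a ∈ ℝ and let h, u be real C² functions on B₁* with Δh = 0 and Δu = ((∂h/∂x + a·y/|z|²)² + (∂h/∂y − a·x/|z|²)²)·e^{2u}, such that the holomorphic function F(z) := ∂h/∂x − i·∂h/∂y has finite order N at 0; set n := N if a = 0 and n := min(−1, N) otherwise. Suppose there exist β ∈ ℤ with β < n+1 and a constant c such that u(z) + β·log|z| → c as z → 0 (a conical singularity of integer order). Let ω_∇ = M_r dr + M_θ dθ be the connection form determined by (h,u,a), and for r ∈ (0,1) let Φ_r : [0,2π] → M₂(ℝ) solve Φ_r'(s) = −M_θ(r e^{is})·Φ_r(s), Φ_r(0) = 𝟙. Then for every r ∈ (0,1) the holonomy Φ_r(2π) equals (−1)^β·𝟙, i.e. it is the identity if β is even and minus the identity if β is odd. -/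

import Mathlib

open Complex Real Set Topology Filter Matrix

/-- Partial derivative in the `x`-direction of a function on `ℂ ≅ ℝ²`. -/
noncomputable def pdx (f : ℂ → ℝ) (z : ℂ) : ℝ := deriv (fun t : ℝ => f (z + t)) 0

/-- Partial derivative in the `y`-direction. -/
noncomputable def pdy (f : ℂ → ℝ) (z : ℂ) : ℝ := deriv (fun t : ℝ => f (z + t * Complex.I)) 0

/-- The flat Laplacian `Δ = ∂²/∂x² + ∂²/∂y²`. -/
noncomputable def lap (f : ℂ → ℝ) (z : ℂ) : ℝ := pdx (pdx f) z + pdy (pdy f) z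

/-- The punctured open unit disc `B₁* = {0 < |z| < 1}`. -/
def PDisc : Set ℂ := {z : ℂ | 0 < ‖z‖ ∧ ‖z‖ < 1}

/-- Radial derivative `∂f/∂r` expressed in Cartesian coordinates. -/
noncomputable def pdr (f : ℂ → ℝ) (z : ℂ) : ℝ :=
  (z.re * pdx f z + z.im * pdy f z) / ‖z‖

/-- Angular derivative `∂f/∂θ` expressed in Cartesian coordinates. -/
noncomputable def pdθ (f : ℂ → ℝ) (z : ℂ) : ℝ :=
  -z.im * pdx f z + z.re * pdy f z

/-- `ω₁₁(∂_r)` where `2ω₁₁ = e^u (dh − a dθ) − du`. -/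
noncomputable def ω11r (h u : ℂ → ℝ) (a : ℝ) (z : ℂ) : ℝ :=
  (Real.exp (u z) * pdr h z - pdr u z) / 2

/-- `ω₁₁(∂_θ)`. -/
noncomputable def ω11θ (h u : ℂ → ℝ) (a : ℝ) (z : ℂ) : ℝ :=
  (Real.exp (u z) * (pdθ h z - a) - pdθ u z) / 2

/-- `ω₂₂(∂_r)` where `2ω₂₂ = −e^u (dh − a dθ) − du`. -/
noncomputable def ω22r (h u : ℂ → ℝ) (a : ℝ) (z : ℂ) : ℝ :=
  -(Real.exp (u z) * pdr h z + pdr u z) / 2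

/-- `ω₂₂(∂_θ)`. -/
noncomputable def ω22θ (h u : ℂ → ℝ) (a : ℝ) (z : ℂ) : ℝ :=
  -(Real.exp (u z) * (pdθ h z - a) + pdθ u z) / 2

/-- The `dθ`-component `M_θ` of the connection form `ω_∇ = M_r dr + M_θ dθ`. -/
noncomputable def Mθ (h u : ℂ → ℝ) (a : ℝ) (z : ℂ) : Matrix (Fin 2) (Fin 2) ℝ :=
  !![ω11θ h u a z, -‖z‖ * ω11r h u a z;
     ‖z‖ * ω22r h u a z, ω22θ h u a z]

/-- The `dr`-component `M_r` of the connection form. -/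
noncomputable def Mr (h u : ℂ → ℝ) (a : ℝ) (z : ℂ) : Matrix (Fin 2) (Fin 2) ℝ :=
  !![ω11r h u a z, ω11θ h u a z / ‖z‖;
     -ω22θ h u a z / ‖z‖, ω22r h u a z]

set_option linter.unusedSimpArgs false

lemma unif {E : Type*} [NormedAddCommGroup E] [NormedSpace ℝ E] (g g' : ℝ → ℝ → E)
    (hd : ∀ t < 0, ∀ s, HasDerivAt (fun t => g t s) (g' t s) t)
    (hc : ContinuousOn (fun x : ℝ × ℝ => g' x.1 x.2) {x | x.1 < 0}) (t0 : ℝ) (ht0 : t0 < 0)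
    (ε : ℝ) (hε : 0 < ε) :
    ∀ᶠ t in 𝓝 t0, ∀ s ∈ Icc (0:ℝ) (2 * π),
      ‖g t s - g t0 s - (t - t0) • g' t0 s‖ ≤ ε * |t - t0| := by
  have hcomp : IsCompact (Icc (t0 - 1) (t0 / 2) ×ˢ Icc (0:ℝ) (2 * π)) :=
    isCompact_Icc.prod isCompact_Icc
  have huc := hcomp.uniformContinuousOn_of_continuous (hc.mono (by
    rintro ⟨a, b⟩ ⟨h1, h2⟩
    simp only [mem_Icc] at h1
    simp only [mem_ofPred_eq]; linarith [h1.2]))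
  rw [Metric.uniformContinuousOn_iff] at huc
  obtain ⟨δ, hδ, H⟩ := huc ε hε
  set ρ := min δ (min 1 (-t0 / 2)) with hρ
  have hρ0 : 0 < ρ := by
    refine lt_min hδ (lt_min one_pos (by linarith))
  have hρ1 : ρ ≤ δ := min_le_left _ _
  have hρ2 : ρ ≤ 1 := (min_le_right _ _).trans (min_le_left _ _)
  have hρ3 : ρ ≤ -t0 / 2 := (min_le_right _ _).trans (min_le_right _ _)
  filter_upwards [Metric.ball_mem_nhds t0 hρ0] with t ht s hs
  have key := Convex.norm_image_sub_le_of_norm_hasDerivWithin_le (𝕜 := ℝ)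
    (f := fun t => g t s - (t - t0) • g' t0 s) (f' := fun t => g' t s - g' t0 s)
    (s := Metric.ball t0 ρ) (x := t0) (y := t) (C := ε) ?_ ?_ (convex_ball _ _)
    (Metric.mem_ball_self hρ0) ht
  · simpa [Real.norm_eq_abs, sub_right_comm] using key
  · intro x hx
    rw [Metric.mem_ball, Real.dist_eq, abs_lt] at hx
    have := (hd x (by linarith) s).fun_sub
      (((hasDerivAt_id x).sub_const t0).smul_const (g' t0 s))
    simpa using this.hasDerivWithinAt
  · intro x hx
    have hx' := hx
    rw [Metric.mem_ball, Real.dist_eq, abs_lt] at hx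
    have := H (x, s) ⟨⟨by simp; linarith, by simp; linarith⟩, hs⟩ (t0, s)
      ⟨⟨by simp, by simp; linarith⟩, hs⟩ (by
        rw [Prod.dist_eq]; simp only [dist_self]
        rw [max_eq_left dist_nonneg]; exact lt_of_lt_of_le hx' hρ1)
    rw [dist_eq_norm] at this
    exact this.le

/-- derivative of holonomy -/
lemma holoDeriv {𝔸 : Type*} [NormedRing 𝔸] [NormedAlgebra ℝ 𝔸]
    (M dM A dA : ℝ → ℝ → 𝔸) (Φ : ℝ → ℝ → 𝔸)
    (hMd : ∀ t < 0, ∀ s, HasDerivAt (fun t => M t s) (dM t s) t)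
    (hMc : ContinuousOn (fun x : ℝ × ℝ => dM x.1 x.2) {x | x.1 < 0})
    (hMs : ∀ t < 0, Continuous (M t))
    (hA : ∀ t < 0, ∀ s, HasDerivAt (A t) (dA t s) s)
    (hflat : ∀ t < 0, ∀ s, dM t s - dA t s + A t s * M t s - M t s * A t s = 0)
    (hper : ∀ t < 0, A t (2 * π) = A t 0)
    (h0 : ∀ t < 0, Φ t 0 = 1)
    (hΦ : ∀ t < 0, ∀ s, HasDerivAt (Φ t) (- M t s * Φ t s) s) (t0 : ℝ) (ht0 : t0 < 0) :
    HasDerivAt (fun t => Φ t (2 * π))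
      (Φ t0 (2 * π) * A t0 0 - A t0 0 * Φ t0 (2 * π)) t0 := by
  have hpi : (0:ℝ) ≤ 2 * π := by positivity
  have hAc : Continuous (A t0) :=
    continuous_iff_continuousAt.2 fun s => (hA t0 ht0 s).continuousAt
  have hΦc : Continuous (Φ t0) :=
    continuous_iff_continuousAt.2 fun s => (hΦ t0 ht0 s).continuousAt
  have hdMc : Continuous (dM t0) := by
    rw [← continuousOn_univ]
    exact hMc.comp (f := fun s : ℝ => (t0, s)) (by fun_prop) (fun s _ => ht0)
  have bd : ∀ f : ℝ → 𝔸, Continuous f → ∃ C, 0 ≤ C ∧ ∀ s ∈ Icc (0:ℝ) (2 * π), ‖f s‖ ≤ C := by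
    intro f hf
    obtain ⟨C, hC⟩ := (isCompact_Icc (a := (0:ℝ)) (b := 2 * π)).exists_bound_of_continuousOn
      hf.continuousOn
    exact ⟨C, (norm_nonneg _).trans (hC 0 ⟨le_rfl, hpi⟩), hC⟩
  obtain ⟨cM, hcM0, hcM⟩ := bd _ (hMs t0 ht0)
  obtain ⟨cd, hcd0, hcd⟩ := bd _ hdMc
  obtain ⟨cA, hcA0, hcA⟩ := bd _ hAc
  obtain ⟨cΦ, hcΦ0, hcΦ⟩ := bd _ hΦc
  set A0 := A t0 0 with hA0
  set B : ℝ := cΦ * (1 + ‖A0‖) with hB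
  have hB0 : 0 ≤ B := by positivity
  set K : ℝ := cM + cd + 1 + 1 with hK
  have hKpos : 0 < K := by positivity
  -- total error constant
  set E1 : ℝ := (‖(1:𝔸)‖ + cA) * B + (cd * cA) * B with hE1
  set CC : ℝ := ‖A0 * A0‖ * Real.exp (K * (2 * π)) + E1 / K * (Real.exp (K * (2 * π)) - 1)
    + ‖A0 * Φ t0 (2 * π) * A0‖ with hCC
  rw [hasDerivAt_iff_isLittleO, Asymptotics.isLittleO_iff]
  intro ε hε
  obtain ⟨η, hη0, hη1, hη⟩ : ∃ η : ℝ, 0 < η ∧ η ≤ 1 ∧ CC * η ≤ ε := by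
    refine ⟨min 1 (ε / (|CC| + 1)), by positivity, min_le_left _ _, ?_⟩
    have h1 : min 1 (ε / (|CC| + 1)) ≤ ε / (|CC| + 1) := min_le_right _ _
    have h2 : 0 < min 1 (ε / (|CC| + 1)) := by positivity
    rw [le_div_iff₀ (by positivity)] at h1
    nlinarith [le_abs_self CC]
  filter_upwards [unif M dM hMd hMc t0 ht0 η hη0, Metric.ball_mem_nhds t0 hη0,
    Iio_mem_nhds ht0] with t hu hball htneg
  rw [Metric.mem_ball, Real.dist_eq] at hball
  set τ := t - t0 with hτ
  have hττ : |τ| * |τ| ≤ η * |τ| := by gcongr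
  have hτ1 : |τ| ≤ 1 := hball.le.trans hη1
  set Z : ℝ → 𝔸 := fun s => (1 - τ • A t0 s) * Φ t0 s * (1 + τ • A0) with hZ
  set Z' : ℝ → 𝔸 := fun s => ((-(τ • dA t0 s)) * Φ t0 s
      + (1 - τ • A t0 s) * (- M t0 s * Φ t0 s)) * (1 + τ • A0) with hZ'
  have hZd : ∀ s, HasDerivAt Z (Z' s) s := by
    intro s
    have h1 : HasDerivAt (fun s => (1:𝔸) - τ • A t0 s) (-(τ • dA t0 s)) s := by
      simpa using ((hA t0 ht0 s).const_smul τ).const_sub (1:𝔸)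
    exact (h1.mul (hΦ t0 ht0 s)).mul_const _
  set err : ℝ → 𝔸 := fun s =>
    ((M t s - M t0 s - τ • dM t0 s) * (1 - τ • A t0 s) - (τ * τ) • (dM t0 s * A t0 s))
      * (Φ t0 s * (1 + τ • A0)) with herr
  have hZ'e : ∀ s, Z' s = - M t s * Z s + err s := by
    intro s
    have hf := hflat t0 ht0 s
    have hf' : dA t0 s = dM t0 s + A t0 s * M t0 s - M t0 s * A t0 s := by
      rw [← sub_eq_zero, ← neg_eq_zero, ← hf]; abel
    simp only [hZ, hZ', herr, hf']
    simp only [smul_mul_assoc, mul_smul_comm, smul_sub, smul_add, sub_mul, mul_sub, add_mul, mul_add,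
      neg_mul, mul_neg, one_mul, mul_one, mul_assoc, smul_smul, smul_neg]
    abel
  have herrb : ∀ s ∈ Icc (0:ℝ) (2*π), ‖err s‖ ≤ E1 * (η * |τ|) := by
    intro s hs
    have e1 : ‖Φ t0 s * (1 + τ • A0)‖ ≤ ‖Φ t0 s * (1 + τ • A0)‖ := le_rfl
    have e2 : ‖Φ t0 s * (1 + τ • A0)‖ ≤ B := by
      have : Φ t0 s * (1 + τ • A0) = Φ t0 s + τ • (Φ t0 s * A0) := by
        rw [mul_add, mul_one, mul_smul_comm]
      rw [this]
      calc ‖Φ t0 s + τ • (Φ t0 s * A0)‖ ≤ ‖Φ t0 s‖ + |τ| * (‖Φ t0 s‖ * ‖A0‖) := by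
            refine (norm_add_le _ _).trans ?_
            rw [norm_smul, Real.norm_eq_abs]
            gcongr
            exact norm_mul_le _ _
        _ ≤ cΦ + 1 * (cΦ * ‖A0‖) := by
            gcongr <;> exact hcΦ s hs
        _ = B := by rw [hB]; ring
    have e3 : ‖(1:𝔸) - τ • A t0 s‖ ≤ ‖(1:𝔸)‖ + cA := by
      refine (norm_sub_le _ _).trans ?_
      rw [norm_smul, Real.norm_eq_abs]
      have := hcA s hs
      have := mul_le_mul hτ1 this (norm_nonneg _) zero_le_one
      linarith
    have e4 : ‖(τ * τ) • (dM t0 s * A t0 s)‖ ≤ (η * |τ|) * (cd * cA) := by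
      rw [norm_smul, Real.norm_eq_abs, abs_mul]
      refine mul_le_mul hττ ?_ (norm_nonneg _) (by positivity)
      exact (norm_mul_le _ _).trans (mul_le_mul (hcd s hs) (hcA s hs) (norm_nonneg _) hcd0)
    calc ‖err s‖ ≤ _ := norm_mul_le _ _
      _ ≤ ((η * |τ|) * (‖(1:𝔸)‖ + cA) + (η * |τ|) * (cd * cA)) * B := by
        refine mul_le_mul ?_ e2 (norm_nonneg _) (by positivity)
        refine (norm_sub_le _ _).trans (add_le_add ?_ e4)
        exact (norm_mul_le _ _).trans (mul_le_mul (hu s hs) e3 (norm_nonneg _) (by positivity))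
      _ = _ := by rw [hE1]; ring
  have hMb : ∀ s ∈ Icc (0:ℝ) (2*π), ‖M t s‖ ≤ K := by
    intro s hs
    have h1 := hu s hs
    have : M t s = (M t s - M t0 s - τ • dM t0 s) + M t0 s + τ • dM t0 s := by abel
    rw [this]
    refine (norm_add_le _ _).trans ?_
    refine (add_le_add (norm_add_le _ _) (norm_smul_le _ _)).trans ?_
    rw [Real.norm_eq_abs]
    have h2 : η * |τ| ≤ 1 := by nlinarith [abs_nonneg τ]
    have h3 : |τ| * ‖dM t0 s‖ ≤ 1 * cd := mul_le_mul hτ1 (hcd s hs) (norm_nonneg _) zero_le_one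
    have h4 := hcM s hs
    linarith
  have hgr := norm_le_gronwallBound_of_norm_deriv_right_le (f := fun s => Φ t s - Z s)
    (f' := fun s => - M t s * Φ t s - Z' s) (δ := ‖A0 * A0‖ * (η * |τ|)) (K := K)
    (ε := E1 * (η * |τ|)) (a := 0) (b := 2 * π)
    (fun s _ => ((hΦ t htneg s).sub (hZd s)).continuousAt.continuousWithinAt)
    (fun s _ => ((hΦ t htneg s).sub (hZd s)).hasDerivWithinAt) ?_ ?_ (2 * π) ⟨hpi, le_rfl⟩
  · rw [gronwallBound_of_K_ne_0 hKpos.ne'] at hgr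
    simp only [sub_zero] at hgr
    have hid : Φ t (2 * π) - Φ t0 (2 * π) - τ • (Φ t0 (2 * π) * A0 - A0 * Φ t0 (2 * π))
        = (Φ t (2 * π) - Z (2 * π)) - (τ * τ) • (A0 * Φ t0 (2 * π) * A0) := by
      simp only [hZ, hper t0 ht0, ← hA0]
      simp only [smul_mul_assoc, mul_smul_comm, smul_sub, smul_add, sub_mul, mul_sub, add_mul,
        mul_add, neg_mul, mul_neg, one_mul, mul_one, mul_assoc, smul_smul, smul_neg]
      abel
    rw [hid]
    refine (norm_sub_le _ _).trans ?_
    have h5 : ‖(τ * τ) • (A0 * Φ t0 (2 * π) * A0)‖ ≤ (η * |τ|) * ‖A0 * Φ t0 (2 * π) * A0‖ := by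
      rw [norm_smul, Real.norm_eq_abs, abs_mul]
      gcongr
    rw [Real.norm_eq_abs]
    calc _ ≤ _ := add_le_add hgr h5
      _ = (CC * η) * |τ| := by rw [hCC]; ring
      _ ≤ _ := by gcongr
  · have : Φ t 0 - Z 0 = (τ * τ) • (A0 * A0) := by
      simp only [hZ, h0 t htneg, h0 t0 ht0, ← hA0]
      simp only [smul_mul_assoc, mul_smul_comm, smul_sub, smul_add, sub_mul, mul_sub, add_mul,
        mul_add, neg_mul, mul_neg, one_mul, mul_one, mul_assoc, smul_smul, smul_neg]
      abel
    simp only [this]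
    rw [norm_smul, Real.norm_eq_abs, abs_mul, mul_comm]
    gcongr
  · intro s hs
    have hs' : s ∈ Icc (0:ℝ) (2*π) := ⟨hs.1, hs.2.le⟩
    have : - M t s * Φ t s - Z' s = - M t s * (Φ t s - Z s) - err s := by
      rw [hZ'e]; rw [mul_sub]; abel
    simp only [this]
    refine (norm_sub_le _ _).trans (add_le_add ?_ (herrb s hs'))
    refine (norm_mul_le _ _).trans ?_
    rw [norm_neg]
    gcongr
    exact hMb s hs'

lemma columnEst (p q Us Ut U w1 w2 : ℝ → ℝ) (K : ℝ) (hK : 0 < K)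
    (hU : ∀ s, HasDerivAt U (Us s) s) (hUt : Continuous Ut)
    (h1 : ∀ s, HasDerivAt w1 (-((p s - Us s) / 2 * w1 s + (Ut s - q s) / 2 * w2 s)) s)
    (h2 : ∀ s, HasDerivAt w2 (-((-Ut s - q s) / 2 * w1 s + (-p s - Us s) / 2 * w2 s)) s)
    (hper : U (2 * π) = U 0) (hp : ∀ s, |p s| ≤ K) (hq : ∀ s, |q s| ≤ K) :
    ‖((w1 (2 * π) : ℂ) + w2 (2 * π) * I)
      - Complex.exp (I * ((∫ x in (0:ℝ)..(2 * π), Ut x) / 2 : ℝ)) * ((w1 0 : ℂ) + w2 0 * I)‖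
      ≤ ‖((w1 0 : ℂ) + w2 0 * I)‖ * (Real.exp (K * (2 * π)) - 1) := by
  set θ : ℝ → ℝ := fun s => (∫ x in (0:ℝ)..s, Ut x) / 2 with hθ
  have hθd : ∀ s, HasDerivAt θ (Ut s / 2) s := fun s =>
    (intervalIntegral.integral_hasDerivAt_right (hUt.intervalIntegrable _ _)
      (hUt.stronglyMeasurableAtFilter _ _) hUt.continuousAt).div_const 2
  set w : ℝ → ℂ := fun s => (w1 s : ℂ) + w2 s * I with hw
  set e : ℝ → ℂ := fun s => Complex.exp (-((U s - U 0) / 2 : ℝ) - I * (θ s : ℝ)) with he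
  have hed : ∀ s, HasDerivAt e (e s * (-(Us s / 2 : ℝ) - I * (Ut s / 2 : ℝ))) s := by
    intro s
    have a1 : HasDerivAt (fun s => (((U s - U 0) / 2 : ℝ) : ℂ)) ((Us s / 2 : ℝ) : ℂ) s :=
      (((hU s).sub_const (U 0)).div_const 2).ofReal_comp
    have a2 : HasDerivAt (fun s => ((θ s : ℝ) : ℂ)) ((Ut s / 2 : ℝ) : ℂ) s := (hθd s).ofReal_comp
    exact (a1.fun_neg.fun_sub (a2.const_mul I)).cexp
  have hwd : ∀ s, HasDerivAt w ((Us s / 2 : ℝ) * w s + I * (Ut s / 2 : ℝ) * w s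
      + (-(p s : ℂ) + I * q s) / 2 * (starRingEnd ℂ) (w s)) s := by
    intro s
    have := (h1 s).ofReal_comp.fun_add ((h2 s).ofReal_comp.mul_const I)
    refine this.congr_deriv ?_
    simp only [hw, map_add, map_mul, Complex.conj_ofReal, Complex.conj_I]
    push_cast
    linear_combination (-(Ut s : ℂ) * w2 s / 2 + q s * w2 s / 2) * Complex.I_sq
  set y : ℝ → ℂ := fun s => e s * w s with hy
  have hyd : ∀ s, HasDerivAt y (e s * ((-(p s : ℂ) + I * q s) / 2 * (starRingEnd ℂ) (w s))) s := by
    intro s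
    refine ((hed s).fun_mul (hwd s)).congr_deriv ?_
    ring
  have hcoef : ∀ s, ‖(-(p s : ℂ) + I * q s) / 2‖ ≤ K := by
    intro s
    rw [norm_div]
    have : ‖(-(p s : ℂ) + I * q s)‖ ≤ K + K := by
      refine (norm_add_le _ _).trans (add_le_add ?_ ?_)
      · rw [norm_neg, Complex.norm_real]; exact hp s
      · rw [norm_mul, Complex.norm_I, Complex.norm_real, one_mul]; exact hq s
    rw [Complex.norm_two]; linarith
  have hydn : ∀ s, ‖e s * ((-(p s : ℂ) + I * q s) / 2 * (starRingEnd ℂ) (w s))‖ ≤ K * ‖y s‖ := by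
    intro s
    rw [norm_mul, norm_mul, hy, norm_mul, RCLike.norm_conj]
    have := mul_le_mul_of_nonneg_right (hcoef s) (mul_nonneg (norm_nonneg (e s)) (norm_nonneg (w s)))
    linarith
  have he0 : e 0 = 1 := by simp [he, hθ]
  have hgr := norm_le_gronwallBound_of_norm_deriv_right_le (f := fun s => y s - w 0)
    (f' := fun s => e s * ((-(p s : ℂ) + I * q s) / 2 * (starRingEnd ℂ) (w s))) (δ := 0) (K := K)
    (ε := K * ‖w 0‖) (a := 0) (b := 2 * π)
    (fun s _ => ((hyd s).sub_const _).continuousAt.continuousWithinAt)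
    (fun s _ => ((hyd s).sub_const _).hasDerivWithinAt) (by simp [hy, he0]) ?_ (2 * π)
    ⟨by positivity, le_rfl⟩
  · rw [gronwallBound_of_K_ne_0 hK.ne'] at hgr
    have e2 : e (2 * π) = Complex.exp (-(I * (θ (2 * π) : ℝ))) := by
      simp [he, hper]
    have e3 : Complex.exp (I * (θ (2 * π) : ℝ)) * e (2 * π) = 1 := by
      rw [e2, ← Complex.exp_add]; simp
    have e4 : w (2 * π) - Complex.exp (I * (θ (2 * π) : ℝ)) * w 0
        = Complex.exp (I * (θ (2 * π) : ℝ)) * (y (2 * π) - w 0) := by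
      rw [mul_sub, hy]; simp only []; rw [← mul_assoc, e3, one_mul]
    change ‖w (2 * π) - Complex.exp (I * (θ (2 * π) : ℝ)) * w 0‖ ≤ ‖w 0‖ * _
    rw [e4, norm_mul, mul_comm I, Complex.norm_exp_ofReal_mul_I, one_mul]
    refine hgr.trans (le_of_eq ?_)
    rw [mul_div_cancel_left₀ _ hK.ne']
    simp
  · intro s _
    refine (hydn s).trans ?_
    have : ‖y s‖ ≤ ‖y s - w 0‖ + ‖w 0‖ := by
      simpa using norm_add_le (y s - w 0) (w 0)
    nlinarith

lemma fluxSeq (U Ut : ℝ → ℝ → ℝ)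
    (hU : ∀ t < 0, ∀ s, HasDerivAt (fun t => U t s) (Ut t s) t)
    (hUc : ContinuousOn (fun x : ℝ × ℝ => U x.1 x.2) {x | x.1 < 0})
    (hUtc : ContinuousOn (fun x : ℝ × ℝ => Ut x.1 x.2) {x | x.1 < 0})
    (β c : ℝ) (hcon : ∀ ε > 0, ∃ T < 0, ∀ t < T, ∀ s, |U t s + β * t - c| ≤ ε)
    (ε : ℝ) (hε : 0 < ε) (T0 : ℝ) :
    ∃ ξ < T0, |(∫ s in (0:ℝ)..(2 * π), Ut ξ s) + 2 * π * β| ≤ ε := by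
  have cs : ∀ f : ℝ → ℝ → ℝ, ContinuousOn (fun x : ℝ × ℝ => f x.1 x.2) {x | x.1 < 0} →
      ∀ t < 0, Continuous (f t) := by
    intro f hf t ht
    rw [← continuousOn_univ]
    exact hf.comp (f := fun s : ℝ => (t, s)) (by fun_prop) (fun s _ => ht)
  set m : ℝ → ℝ := fun t => ∫ s in (0:ℝ)..(2 * π), U t s with hm
  have hmd : ∀ t < 0, HasDerivAt m (∫ s in (0:ℝ)..(2 * π), Ut t s) t := by
    intro t0 ht0
    rw [hasDerivAt_iff_isLittleO, Asymptotics.isLittleO_iff]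
    intro δ hδ
    filter_upwards [unif U Ut hU hUtc t0 ht0 (δ / (2 * π)) (by positivity), Iio_mem_nhds ht0]
      with t ht htn
    have i1 := (cs U hUc t htn).intervalIntegrable (μ := MeasureTheory.volume) 0 (2 * π)
    have i2 := (cs U hUc t0 ht0).intervalIntegrable (μ := MeasureTheory.volume) 0 (2 * π)
    have i3 := (cs Ut hUtc t0 ht0).intervalIntegrable (μ := MeasureTheory.volume) 0 (2 * π)
    have : m t - m t0 - (t - t0) * (∫ s in (0:ℝ)..(2 * π), Ut t0 s)
        = ∫ s in (0:ℝ)..(2 * π), (U t s - U t0 s - (t - t0) * Ut t0 s) := by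
      rw [intervalIntegral.integral_sub (i1.sub i2) (i3.continuousOn_mul continuousOn_const),
        intervalIntegral.integral_sub i1 i2, intervalIntegral.integral_const_mul]
    rw [smul_eq_mul, this]
    have hb := intervalIntegral.norm_integral_le_of_norm_le_const (a := 0) (b := 2 * π)
      (f := fun s => U t s - U t0 s - (t - t0) * Ut t0 s) (C := δ / (2 * π) * |t - t0|) (by
        intro s hs
        rw [uIoc_of_le (by positivity)] at hs
        exact ht s ⟨hs.1.le, hs.2⟩)
    refine hb.trans (le_of_eq ?_)
    rw [sub_zero, abs_of_pos (by positivity : (0:ℝ) < 2 * π), Real.norm_eq_abs]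
    field_simp
  obtain ⟨T, hT, hTc⟩ := hcon (ε / (4 * π)) (by positivity)
  set t1 := min T T0 - 1 with ht1
  have ht1T : t1 < T := by have := min_le_left T T0; linarith
  have ht1T0 : t1 < T0 := by have := min_le_right T T0; linarith
  have hmb : ∀ t < T, |m t + 2 * π * β * t - 2 * π * c| ≤ ε / 2 := by
    intro t ht
    have i1 := (cs U hUc t (ht.trans hT)).intervalIntegrable (μ := MeasureTheory.volume) 0 (2 * π)
    have : m t + 2 * π * β * t - 2 * π * c = ∫ s in (0:ℝ)..(2 * π), (U t s + (β * t - c)) := by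
      rw [intervalIntegral.integral_add i1 (by simp), intervalIntegral.integral_const, hm]
      simp; ring
    rw [this]
    have hb := intervalIntegral.norm_integral_le_of_norm_le_const (a := 0) (b := 2 * π)
      (f := fun s => U t s + (β * t - c)) (C := ε / (4 * π)) (by
        intro s hs
        rw [← add_sub_assoc]
        exact hTc t ht s)
    refine hb.trans (le_of_eq ?_)
    rw [sub_zero, abs_of_pos (by positivity : (0:ℝ) < 2 * π)]
    field_simp
    norm_num
  have hder : ∀ x < 0, HasDerivAt (fun t => m t + 2 * π * β * t)
      ((∫ s in (0:ℝ)..(2 * π), Ut x s) + 2 * π * β) x := by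
    intro x hx
    have := (hmd x hx).fun_add ((hasDerivAt_id x).const_mul (2 * π * β))
    simpa using this
  obtain ⟨ξ, hξ, hξe⟩ := exists_hasDerivAt_eq_slope (fun t => m t + 2 * π * β * t)
    (fun x => (∫ s in (0:ℝ)..(2 * π), Ut x s) + 2 * π * β) (a := t1 - 1) (b := t1) (by linarith)
    (fun x hx => (hder x (by linarith [hx.2])).continuousAt.continuousWithinAt)
    (fun x hx => hder x (by linarith [hx.2]))
  refine ⟨ξ, by linarith [hξ.2], ?_⟩
  rw [hξe]
  have b1 := abs_le.1 (hmb t1 ht1T)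
  have b2 := abs_le.1 (hmb (t1 - 1) (by linarith))
  rw [sub_sub_cancel, div_one, abs_le]
  constructor <;> linarith [b1.1, b1.2, b2.1, b2.2]

section
attribute [local instance] Matrix.linftyOpNormedRing Matrix.linftyOpNormedAlgebra

/-- Real `2 × 2` matrix-valued functions: entrywise derivative gives a derivative. -/
lemma matHasDerivAt (f : ℝ → Matrix (Fin 2) (Fin 2) ℝ) (f' : Matrix (Fin 2) (Fin 2) ℝ) (x : ℝ)
    (h : ∀ i j, HasDerivAt (fun y => f y i j) (f' i j) x) : HasDerivAt f f' x := by
  have e : ∀ A : Matrix (Fin 2) (Fin 2) ℝ, A = A 0 0 • !![1, 0; 0, 0] + A 0 1 • !![0, 1; 0, 0]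
      + A 1 0 • !![0, 0; 1, 0] + A 1 1 • !![0, 0; 0, 1] := by
    intro A; ext i j; fin_cases i <;> fin_cases j <;> simp
  rw [e f', show f = fun y => f y 0 0 • !![1, 0; 0, 0] + f y 0 1 • !![0, 1; 0, 0]
      + f y 1 0 • !![0, 0; 1, 0] + f y 1 1 • !![0, 0; 0, 1] from funext fun y => e (f y)]
  exact ((((h 0 0).smul_const _).fun_add ((h 0 1).smul_const _)).fun_add
    ((h 1 0).smul_const _)).fun_add ((h 1 1).smul_const _)

lemma matContOn {X : Type*} [TopologicalSpace X] (f : X → Matrix (Fin 2) (Fin 2) ℝ) (S : Set X)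
    (h : ∀ i j, ContinuousOn (fun y => f y i j) S) : ContinuousOn f S := by
  have e : ∀ A : Matrix (Fin 2) (Fin 2) ℝ, A = A 0 0 • !![1, 0; 0, 0] + A 0 1 • !![0, 1; 0, 0]
      + A 1 0 • !![0, 0; 1, 0] + A 1 1 • !![0, 0; 0, 1] := by
    intro A; ext i j; fin_cases i <;> fin_cases j <;> simp
  rw [show f = fun y => f y 0 0 • !![1, 0; 0, 0] + f y 0 1 • !![0, 1; 0, 0]
      + f y 1 0 • !![0, 0; 1, 0] + f y 1 1 • !![0, 0; 0, 1] from funext fun y => e (f y)]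
  exact ((((h 0 0).smul continuousOn_const).add ((h 0 1).smul continuousOn_const)).add
    ((h 1 0).smul continuousOn_const)).add ((h 1 1).smul continuousOn_const)

lemma matEntryDeriv (f : ℝ → Matrix (Fin 2) (Fin 2) ℝ) (f' : Matrix (Fin 2) (Fin 2) ℝ) (x : ℝ)
    (h : HasDerivAt f f' x) (i j : Fin 2) : HasDerivAt (fun y => f y i j) (f' i j) x := by
  have := (LinearMap.toContinuousLinearMap (Matrix.entryLinearMap ℝ ℝ i j)).hasFDerivAt.comp_hasDerivAt x h
  exact this

lemma holoDerivMat
    (M dM A dA : ℝ → ℝ → Matrix (Fin 2) (Fin 2) ℝ) (Φ : ℝ → ℝ → Matrix (Fin 2) (Fin 2) ℝ)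
    (hMd : ∀ t < 0, ∀ s, ∀ i j, HasDerivAt (fun t => M t s i j) (dM t s i j) t)
    (hMc : ∀ i j, ContinuousOn (fun x : ℝ × ℝ => dM x.1 x.2 i j) {x | x.1 < 0})
    (hMs : ∀ t < 0, ∀ i j, Continuous (fun s => M t s i j))
    (hA : ∀ t < 0, ∀ s, ∀ i j, HasDerivAt (fun s => A t s i j) (dA t s i j) s)
    (hflat : ∀ t < 0, ∀ s, dM t s - dA t s + A t s * M t s - M t s * A t s = 0)
    (hper : ∀ t < 0, A t (2 * π) = A t 0)
    (h0 : ∀ t < 0, Φ t 0 = 1)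
    (hΦ : ∀ t < 0, ∀ s, ∀ i j, HasDerivAt (fun s => Φ t s i j) ((- M t s * Φ t s) i j) s)
    (t0 : ℝ) (ht0 : t0 < 0) (i j : Fin 2) :
    HasDerivAt (fun t => Φ t (2 * π) i j)
      ((Φ t0 (2 * π) * A t0 0 - A t0 0 * Φ t0 (2 * π)) i j) t0 := by
  refine matEntryDeriv _ _ _ (holoDeriv M dM A dA Φ ?_ ?_ ?_ ?_ hflat hper h0 ?_ t0 ht0) i j
  · exact fun t ht s => matHasDerivAt _ _ _ (hMd t ht s)
  · exact matContOn _ _ hMc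
  · intro t ht
    rw [← continuousOn_univ]
    exact matContOn _ _ fun i j => (hMs t ht i j).continuousOn
  · exact fun t ht s => matHasDerivAt _ _ _ (hA t ht s)
  · exact fun t ht s => matHasDerivAt _ _ _ (hΦ t ht s)

end

set_option maxHeartbeats 2000000 in
/-- The main argument in logarithmic polar coordinates `z = exp (t + i s)`. -/
theorem coreHol (U Ut Us Utt Uts Uss α γ αt αs : ℝ → ℝ → ℝ)
    (hU_t : ∀ t < 0, ∀ s, HasDerivAt (fun t => U t s) (Ut t s) t)
    (hU_s : ∀ t < 0, ∀ s, HasDerivAt (fun s => U t s) (Us t s) s)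
    (hUt_t : ∀ t < 0, ∀ s, HasDerivAt (fun t => Ut t s) (Utt t s) t)
    (hUt_s : ∀ t < 0, ∀ s, HasDerivAt (fun s => Ut t s) (Uts t s) s)
    (hUs_t : ∀ t < 0, ∀ s, HasDerivAt (fun t => Us t s) (Uts t s) t)
    (hUs_s : ∀ t < 0, ∀ s, HasDerivAt (fun s => Us t s) (Uss t s) s)
    (hα_t : ∀ t < 0, ∀ s, HasDerivAt (fun t => α t s) (αt t s) t)
    (hα_s : ∀ t < 0, ∀ s, HasDerivAt (fun s => α t s) (αs t s) s)
    (hγ_t : ∀ t < 0, ∀ s, HasDerivAt (fun t => γ t s) (αs t s) t)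
    (hγ_s : ∀ t < 0, ∀ s, HasDerivAt (fun s => γ t s) (-αt t s) s)
    (cU : ContinuousOn (fun x : ℝ × ℝ => U x.1 x.2) {x | x.1 < 0})
    (cUt : ContinuousOn (fun x : ℝ × ℝ => Ut x.1 x.2) {x | x.1 < 0})
    (cUtt : ContinuousOn (fun x : ℝ × ℝ => Utt x.1 x.2) {x | x.1 < 0})
    (cUts : ContinuousOn (fun x : ℝ × ℝ => Uts x.1 x.2) {x | x.1 < 0})
    (cα : ContinuousOn (fun x : ℝ × ℝ => α x.1 x.2) {x | x.1 < 0})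
    (cγ : ContinuousOn (fun x : ℝ × ℝ => γ x.1 x.2) {x | x.1 < 0})
    (cαt : ContinuousOn (fun x : ℝ × ℝ => αt x.1 x.2) {x | x.1 < 0})
    (cαs : ContinuousOn (fun x : ℝ × ℝ => αs x.1 x.2) {x | x.1 < 0})
    (hpde : ∀ t < 0, ∀ s, Utt t s + Uss t s
      = (α t s ^ 2 + γ t s ^ 2) * Real.exp (2 * U t s))
    (pU : ∀ t, U t (2 * π) = U t 0) (pUt : ∀ t, Ut t (2 * π) = Ut t 0)
    (pUs : ∀ t, Us t (2 * π) = Us t 0)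
    (pα : ∀ t, α t (2 * π) = α t 0) (pγ : ∀ t, γ t (2 * π) = γ t 0)
    (β : ℤ) (c : ℝ) (hcon : ∀ ε > 0, ∃ T < 0, ∀ t < T, ∀ s, |U t s + (β : ℝ) * t - c| ≤ ε)
    (T : ℝ) (hT : T < 0) (C : ℝ) (hC : 0 < C)
    (hbα : ∀ t ≤ T, ∀ s, |Real.exp (U t s) * α t s| ≤ C * Real.exp t)
    (hbγ : ∀ t ≤ T, ∀ s, |Real.exp (U t s) * γ t s| ≤ C * Real.exp t)
    (Φ : ℝ → ℝ → Matrix (Fin 2) (Fin 2) ℝ)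
    (h0 : ∀ t < 0, Φ t 0 = 1)
    (hΦ : ∀ t < 0, ∀ s, ∀ i j, HasDerivAt (fun s' => Φ t s' i j)
      ((- !![(Real.exp (U t s) * γ t s - Us t s) / 2, (Ut t s - Real.exp (U t s) * α t s) / 2;
        (-Ut t s - Real.exp (U t s) * α t s) / 2, (-(Real.exp (U t s) * γ t s) - Us t s) / 2]
        * Φ t s) i j) s) :
    Φ T (2 * π) = ((-1 : ℝ) ^ β) • (1 : Matrix (Fin 2) (Fin 2) ℝ) := by
  have cs : ∀ f : ℝ → ℝ → ℝ, ContinuousOn (fun x : ℝ × ℝ => f x.1 x.2) {x | x.1 < 0} →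
      ∀ t < 0, Continuous (f t) := by
    intro f hf t ht
    rw [← continuousOn_univ]
    exact hf.comp (f := fun s : ℝ => (t, s)) (by fun_prop) (fun s _ => ht)
  set p : ℝ → ℝ → ℝ := fun t s => Real.exp (U t s) * γ t s with hp
  set q : ℝ → ℝ → ℝ := fun t s => Real.exp (U t s) * α t s with hq
  set pt : ℝ → ℝ → ℝ := fun t s =>
    Real.exp (U t s) * Ut t s * γ t s + Real.exp (U t s) * αs t s with hpt
  set ps : ℝ → ℝ → ℝ := fun t s =>
    Real.exp (U t s) * Us t s * γ t s + Real.exp (U t s) * (-αt t s) with hps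
  set qt : ℝ → ℝ → ℝ := fun t s =>
    Real.exp (U t s) * Ut t s * α t s + Real.exp (U t s) * αt t s with hqt
  set qs : ℝ → ℝ → ℝ := fun t s =>
    Real.exp (U t s) * Us t s * α t s + Real.exp (U t s) * αs t s with hqs
  have dpt : ∀ t < 0, ∀ s, HasDerivAt (fun t => p t s) (pt t s) t := fun t ht s =>
    (hU_t t ht s).exp.fun_mul (hγ_t t ht s)
  have dps : ∀ t < 0, ∀ s, HasDerivAt (fun s => p t s) (ps t s) s := fun t ht s =>
    (hU_s t ht s).exp.fun_mul (hγ_s t ht s)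
  have dqt : ∀ t < 0, ∀ s, HasDerivAt (fun t => q t s) (qt t s) t := fun t ht s =>
    (hU_t t ht s).exp.fun_mul (hα_t t ht s)
  have dqs : ∀ t < 0, ∀ s, HasDerivAt (fun s => q t s) (qs t s) s := fun t ht s =>
    (hU_s t ht s).exp.fun_mul (hα_s t ht s)
  have cpt : ContinuousOn (fun x : ℝ × ℝ => pt x.1 x.2) {x | x.1 < 0} := by
    simp only [hpt]; fun_prop
  have cqt : ContinuousOn (fun x : ℝ × ℝ => qt x.1 x.2) {x | x.1 < 0} := by
    simp only [hqt]; fun_prop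
  set M : ℝ → ℝ → Matrix (Fin 2) (Fin 2) ℝ := fun t s =>
    !![(p t s - Us t s) / 2, (Ut t s - q t s) / 2;
       (-Ut t s - q t s) / 2, (-p t s - Us t s) / 2] with hM
  set dM : ℝ → ℝ → Matrix (Fin 2) (Fin 2) ℝ := fun t s =>
    !![(pt t s - Uts t s) / 2, (Utt t s - qt t s) / 2;
       (-Utt t s - qt t s) / 2, (-pt t s - Uts t s) / 2] with hdM
  set A : ℝ → ℝ → Matrix (Fin 2) (Fin 2) ℝ := fun t s =>
    !![(q t s - Ut t s) / 2, (p t s - Us t s) / 2;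
       (p t s + Us t s) / 2, (-q t s - Ut t s) / 2] with hA
  set dA : ℝ → ℝ → Matrix (Fin 2) (Fin 2) ℝ := fun t s =>
    !![(qs t s - Uts t s) / 2, (ps t s - Uss t s) / 2;
       (ps t s + Uss t s) / 2, (-qs t s - Uts t s) / 2] with hdA
  have hΦ' : ∀ t < 0, ∀ s, ∀ i j, HasDerivAt (fun s => Φ t s i j) ((- M t s * Φ t s) i j) s := hΦ
  have hder : ∀ t < 0, ∀ i j, HasDerivAt (fun t => Φ t (2 * π) i j)
      ((Φ t (2 * π) * A t 0 - A t 0 * Φ t (2 * π)) i j) t := by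
    intro t ht i j
    refine holoDerivMat M dM A dA Φ ?_ ?_ ?_ ?_ ?_ ?_ h0 hΦ' t ht i j
    · intro t ht s i j
      fin_cases i <;> fin_cases j <;> simp only [hM, hdM, of_apply, cons_val', cons_val_zero,
        cons_val_one, Fin.zero_eta, Fin.mk_one, cons_val_fin_one, Fin.isValue]
      · exact ((dpt t ht s).fun_sub (hUs_t t ht s)).div_const 2
      · exact ((hUt_t t ht s).fun_sub (dqt t ht s)).div_const 2
      · exact ((hUt_t t ht s).fun_neg.fun_sub (dqt t ht s)).div_const 2
      · exact ((dpt t ht s).fun_neg.fun_sub (hUs_t t ht s)).div_const 2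
    · intro i j
      fin_cases i <;> fin_cases j <;> simp only [hM, hdM, of_apply, cons_val', cons_val_zero,
        cons_val_one, Fin.zero_eta, Fin.mk_one, cons_val_fin_one, Fin.isValue] <;> fun_prop
    · intro t ht i j
      have k1 : Continuous (p t) := continuous_iff_continuousAt.2 fun s => (dps t ht s).continuousAt
      have k2 : Continuous (q t) := continuous_iff_continuousAt.2 fun s => (dqs t ht s).continuousAt
      have k3 : Continuous (Us t) :=
        continuous_iff_continuousAt.2 fun s => (hUs_s t ht s).continuousAt
      have k4 := cs Ut cUt t ht
      fin_cases i <;> fin_cases j <;> simp only [hM, hdM, of_apply, cons_val', cons_val_zero,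
        cons_val_one, Fin.zero_eta, Fin.mk_one, cons_val_fin_one, Fin.isValue] <;> fun_prop
    · intro t ht s i j
      fin_cases i <;> fin_cases j <;> simp only [hA, hdA, of_apply, cons_val', cons_val_zero,
        cons_val_one, Fin.zero_eta, Fin.mk_one, cons_val_fin_one, Fin.isValue]
      · exact ((dqs t ht s).fun_sub (hUt_s t ht s)).div_const 2
      · exact ((dps t ht s).fun_sub (hUs_s t ht s)).div_const 2
      · exact ((dps t ht s).fun_add (hUs_s t ht s)).div_const 2
      · exact ((dqs t ht s).fun_neg.fun_sub (hUt_s t ht s)).div_const 2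
    · intro t ht s
      have hpd := hpde t ht s
      have hee : Real.exp (2 * U t s) = Real.exp (U t s) * Real.exp (U t s) := by
        rw [← Real.exp_add]; ring_nf
      rw [hee] at hpd
      ext i j
      fin_cases i <;> fin_cases j <;> simp [hM, hdM, hA, hdA, hp, hq, hpt, hps, hqt, hqs,
        Matrix.mul_apply, Fin.sum_univ_two]
      · ring
      · linear_combination hpd / 2
      · linear_combination - hpd / 2
      · ring
    · intro t ht
      simp only [hA, hp, hq, pU, pUt, pUs, pα, pγ]
  -- the energy
  set σ : ℝ := (-1 : ℝ) ^ β with hσ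
  set f : ℝ → ℝ := fun t => (Φ t (2 * π) 0 0 - σ) ^ 2 + Φ t (2 * π) 0 1 ^ 2
    + Φ t (2 * π) 1 0 ^ 2 + (Φ t (2 * π) 1 1 - σ) ^ 2 with hf
  set f' : ℝ → ℝ := fun t =>
    2 * (p t 0 * (Φ t (2 * π) 0 0 - Φ t (2 * π) 1 1) * (Φ t (2 * π) 0 1 - Φ t (2 * π) 1 0)
      + q t 0 * (Φ t (2 * π) 1 0 ^ 2 - Φ t (2 * π) 0 1 ^ 2)) with hf'
  have hfd : ∀ t < 0, HasDerivAt f (f' t) t := by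
    intro t ht
    have := (((((hder t ht 0 0).sub_const σ).fun_pow 2).fun_add ((hder t ht 0 1).fun_pow 2)).fun_add
      ((hder t ht 1 0).fun_pow 2)).fun_add (((hder t ht 1 1).sub_const σ).fun_pow 2)
    refine this.congr_deriv ?_
    simp only [Matrix.sub_apply, Matrix.mul_apply, Fin.sum_univ_two]
    simp [hf', hA]
    ring
  have hfb : ∀ t ≤ T, f' t ≤ 4 * (C * Real.exp t) * f t := by
    intro t ht
    have b1 := abs_le.1 (hbγ t ht 0)
    have b2 := abs_le.1 (hbα t ht 0)
    have hx : ∀ k x y z : ℝ, -k ≤ x → x ≤ k → |y| ≤ z → x * y ≤ k * z := by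
      intro k x y z a b hy
      calc x * y ≤ |x * y| := le_abs_self _
        _ = |x| * |y| := abs_mul _ _
        _ ≤ k * z := mul_le_mul (abs_le.2 ⟨a, b⟩) hy (abs_nonneg _) (by linarith)
    have g1 := hx _ (p t 0) ((Φ t (2 * π) 0 0 - Φ t (2 * π) 1 1) *
      (Φ t (2 * π) 0 1 - Φ t (2 * π) 1 0)) (f t) b1.1 b1.2 (by
        rw [abs_le]; simp only [hf]
        constructor
        · nlinarith [sq_nonneg ((Φ t (2 * π) 0 0 - Φ t (2 * π) 1 1) +
            (Φ t (2 * π) 0 1 - Φ t (2 * π) 1 0)), sq_nonneg (Φ t (2 * π) 0 1 + Φ t (2 * π) 1 0),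
            sq_nonneg ((Φ t (2 * π) 0 0 - σ) + (Φ t (2 * π) 1 1 - σ))]
        · nlinarith [sq_nonneg ((Φ t (2 * π) 0 0 - Φ t (2 * π) 1 1) -
            (Φ t (2 * π) 0 1 - Φ t (2 * π) 1 0)), sq_nonneg (Φ t (2 * π) 0 1 + Φ t (2 * π) 1 0),
            sq_nonneg ((Φ t (2 * π) 0 0 - σ) + (Φ t (2 * π) 1 1 - σ))])
    have g2 := hx _ (q t 0) (Φ t (2 * π) 1 0 ^ 2 - Φ t (2 * π) 0 1 ^ 2) (f t) b2.1 b2.2 (by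
        rw [abs_le]; simp only [hf]
        constructor <;> nlinarith [sq_nonneg (Φ t (2 * π) 0 0 - σ), sq_nonneg (Φ t (2 * π) 0 1),
          sq_nonneg (Φ t (2 * π) 1 0), sq_nonneg (Φ t (2 * π) 1 1 - σ)])
    simp only [hf']
    linarith
  have hmono : ∀ ξ ≤ T, f T * Real.exp (-(4 * C * Real.exp T)) ≤ f ξ := by
    intro ξ hξ
    have hanti : AntitoneOn (fun t => f t * Real.exp (-(4 * C * Real.exp t))) (Iic T) := by
      have hd : ∀ t ≤ T, HasDerivAt (fun t => f t * Real.exp (-(4 * C * Real.exp t)))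
          (f' t * Real.exp (-(4 * C * Real.exp t))
            + f t * (Real.exp (-(4 * C * Real.exp t)) * (-(4 * C * Real.exp t)))) t := by
        intro t ht
        exact (hfd t (ht.trans_lt hT)).fun_mul
          (((Real.hasDerivAt_exp t).const_mul (4 * C)).fun_neg.exp)
      refine antitoneOn_of_deriv_nonpos (convex_Iic T)
        (fun t ht => (hd t ht).continuousAt.continuousWithinAt) ?_ ?_
      · intro t ht
        exact (hd t (mem_Iic.1 (interior_subset ht))).differentiableAt.differentiableWithinAt
      · intro t ht
        have ht' : t ≤ T := mem_Iic.1 (interior_subset ht)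
        rw [(hd t ht').deriv]
        have := hfb t ht'
        have e0 := Real.exp_pos (-(4 * C * Real.exp t))
        nlinarith
    have h1 := hanti (mem_Iic.2 hξ) (mem_Iic.2 le_rfl) hξ
    refine h1.trans ?_
    have hfn : 0 ≤ f ξ := by positivity
    have : Real.exp (-(4 * C * Real.exp ξ)) ≤ 1 := by
      rw [Real.exp_le_one_iff]
      have : 0 < 4 * C * Real.exp ξ := by positivity
      linarith
    nlinarith
  -- holonomy estimates on small circles
  have hcol : ∀ ξ ≤ T, ∀ w0 w1 : ℝ, ∀ j : Fin 2, (Φ ξ 0 0 j = w0) → (Φ ξ 0 1 j = w1) →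
      ‖((Φ ξ (2 * π) 0 j : ℂ) + Φ ξ (2 * π) 1 j * I)
      - Complex.exp (I * ((∫ x in (0:ℝ)..(2 * π), Ut ξ x) / 2 : ℝ)) * ((w0 : ℂ) + w1 * I)‖
      ≤ ‖((w0 : ℂ) + w1 * I)‖ * (Real.exp (C * Real.exp ξ * (2 * π)) - 1) := by
    intro ξ hξ w0 w1 j e0 e1
    have hξ0 : ξ < 0 := hξ.trans_lt hT
    have := columnEst (p ξ) (q ξ) (Us ξ) (Ut ξ) (U ξ) (fun s => Φ ξ s 0 j) (fun s => Φ ξ s 1 j)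
      (C * Real.exp ξ) (by positivity) (hU_s ξ hξ0) (cs Ut cUt ξ hξ0) ?_ ?_ (pU ξ)
      (hbγ ξ hξ) (hbα ξ hξ)
    · simpa only [e0, e1] using this
    · intro s
      refine (hΦ' ξ hξ0 s 0 j).congr_deriv ?_
      simp [hM, Matrix.mul_apply, Fin.sum_univ_two]
      try ring
    · intro s
      refine (hΦ' ξ hξ0 s 1 j).congr_deriv ?_
      simp [hM, Matrix.mul_apply, Fin.sum_univ_two]
      try ring
  have hrot : Complex.exp (I * ((-(π * β) : ℝ) : ℂ)) = (σ : ℂ) := by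
    have : I * ((-(π * β) : ℝ) : ℂ) = ((-β : ℤ) : ℂ) * (π * I) := by push_cast; ring
    rw [this, Complex.exp_int_mul, Complex.exp_pi_mul_I, hσ]
    push_cast
    rw [_root_.zpow_neg, ← _root_.inv_zpow]
    norm_num
  have hrotd : ∀ L : ℝ, ‖Complex.exp (I * ((L / 2 : ℝ) : ℂ)) - σ‖ ≤ |L + 2 * π * β| / 2 := by
    intro L
    have : Complex.exp (I * ((L / 2 : ℝ) : ℂ)) - σ
        = Complex.exp (I * ((-(π * β) : ℝ) : ℂ)) *
          (Complex.exp (I * (((L + 2 * π * β) / 2 : ℝ) : ℂ)) - 1) := by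
      rw [mul_sub, ← Complex.exp_add, mul_one, hrot]
      congr 2
      push_cast; ring
    rw [this, norm_mul, mul_comm I, Complex.norm_exp_ofReal_mul_I, one_mul]
    refine Real.norm_exp_I_mul_ofReal_sub_one_le.trans ?_
    rw [Real.norm_eq_abs, abs_div, abs_two]
  have hsmall : ∀ ε > 0, ∃ ξ ≤ T, f ξ ≤ 2 * ε ^ 2 := by
    intro ε hε
    have hlim : Tendsto (fun ξ : ℝ => Real.exp (C * Real.exp ξ * (2 * π)) - 1) atBot (𝓝 0) := by
      have h1 : Tendsto (fun ξ : ℝ => C * Real.exp ξ * (2 * π)) atBot (𝓝 (C * 0 * (2 * π))) :=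
        (Real.tendsto_exp_atBot.const_mul C).mul_const _
      have h2 := ((Real.continuous_exp.tendsto _).comp h1).sub_const 1
      simpa using h2
    obtain ⟨T1, hT1⟩ := Filter.eventually_atBot.1 (hlim.eventually (gt_mem_nhds (half_pos hε)))
    obtain ⟨ξ, hξ, hξL⟩ := fluxSeq U Ut hU_t cU cUt β c hcon ε hε (min T T1)
    have hξT : ξ ≤ T := hξ.le.trans (min_le_left _ _)
    have hξ1 := hT1 ξ (hξ.le.trans (min_le_right _ _))
    have hξ0 : ξ < 0 := hξT.trans_lt hT
    have hr := (hrotd (∫ x in (0:ℝ)..(2 * π), Ut ξ x)).trans (by linarith : _ ≤ ε / 2)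
    have c0 := hcol ξ hξT 1 0 0 (by simp [h0 ξ hξ0]) (by simp [h0 ξ hξ0])
    have c1 := hcol ξ hξT 0 1 1 (by simp [h0 ξ hξ0]) (by simp [h0 ξ hξ0])
    set EE := Complex.exp (I * ((∫ x in (0:ℝ)..(2 * π), Ut ξ x) / 2 : ℝ)) with hEE
    simp only [Complex.ofReal_one, Complex.ofReal_zero, zero_mul, add_zero, one_mul, mul_one,
      zero_add, norm_one, Complex.norm_I] at c0 c1
    refine ⟨ξ, hξT, ?_⟩
    have d0 : ‖((Φ ξ (2 * π) 0 0 - σ : ℝ) : ℂ) + (Φ ξ (2 * π) 1 0 : ℝ) * I‖ ≤ ε := by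
      have : ((Φ ξ (2 * π) 0 0 - σ : ℝ) : ℂ) + (Φ ξ (2 * π) 1 0 : ℝ) * I
        = (((Φ ξ (2 * π) 0 0 : ℝ) : ℂ) + (Φ ξ (2 * π) 1 0 : ℝ) * I - EE) + (EE - σ) := by
        push_cast; ring
      rw [this]
      refine (norm_add_le _ _).trans ?_
      linarith
    have d1 : ‖((Φ ξ (2 * π) 0 1 : ℝ) : ℂ) + (Φ ξ (2 * π) 1 1 - σ : ℝ) * I‖ ≤ ε := by
      have : ((Φ ξ (2 * π) 0 1 : ℝ) : ℂ) + (Φ ξ (2 * π) 1 1 - σ : ℝ) * I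
        = (((Φ ξ (2 * π) 0 1 : ℝ) : ℂ) + (Φ ξ (2 * π) 1 1 : ℝ) * I - EE * I) + (EE - σ) * I := by
        push_cast; ring
      rw [this]
      refine (norm_add_le _ _).trans ?_
      rw [norm_mul (EE - σ), Complex.norm_I, mul_one]
      linarith
    have s0 := pow_le_pow_left₀ (norm_nonneg _) d0 2
    have s1 := pow_le_pow_left₀ (norm_nonneg _) d1 2
    rw [Complex.sq_norm, Complex.normSq_add_mul_I] at s0 s1
    simp only [hf]
    linarith
  have hfT : f T = 0 := by
    have hfn : 0 ≤ f T := by positivity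
    by_contra hne
    have hpos : 0 < f T := lt_of_le_of_ne hfn (Ne.symm hne)
    set k := f T * Real.exp (-(4 * C * Real.exp T)) with hk
    have hkpos : 0 < k := by positivity
    obtain ⟨ξ, hξ, h1⟩ := hsmall (Real.sqrt (k / 4)) (by positivity)
    rw [Real.sq_sqrt (by positivity)] at h1
    have := hmono ξ hξ
    linarith
  simp only [hf] at hfT
  have z1 : Φ T (2 * π) 0 0 - σ = 0 := by
    rw [← sq_eq_zero_iff]
    nlinarith [sq_nonneg (Φ T (2 * π) 0 0 - σ), sq_nonneg (Φ T (2 * π) 0 1),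
          sq_nonneg (Φ T (2 * π) 1 0), sq_nonneg (Φ T (2 * π) 1 1 - σ)]
  have z2 : Φ T (2 * π) 0 1 = 0 := by
    rw [← sq_eq_zero_iff]
    nlinarith [sq_nonneg (Φ T (2 * π) 0 0 - σ), sq_nonneg (Φ T (2 * π) 0 1),
          sq_nonneg (Φ T (2 * π) 1 0), sq_nonneg (Φ T (2 * π) 1 1 - σ)]
  have z3 : Φ T (2 * π) 1 0 = 0 := by
    rw [← sq_eq_zero_iff]
    nlinarith [sq_nonneg (Φ T (2 * π) 0 0 - σ), sq_nonneg (Φ T (2 * π) 0 1),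
          sq_nonneg (Φ T (2 * π) 1 0), sq_nonneg (Φ T (2 * π) 1 1 - σ)]
  have z4 : Φ T (2 * π) 1 1 - σ = 0 := by
    rw [← sq_eq_zero_iff]
    nlinarith [sq_nonneg (Φ T (2 * π) 0 0 - σ), sq_nonneg (Φ T (2 * π) 0 1),
          sq_nonneg (Φ T (2 * π) 1 0), sq_nonneg (Φ T (2 * π) 1 1 - σ)]
  ext i j
  fin_cases i <;> fin_cases j <;> simp <;> linarith

/-- The point `exp (t + i s)`. -/
noncomputable def pw (t s : ℝ) : ℂ := ((Real.exp t : ℝ) : ℂ) * Complex.exp ((s : ℝ) * Complex.I)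

lemma pw_re (t s : ℝ) : (pw t s).re = Real.exp t * Real.cos s := by
  rw [pw, Complex.re_ofReal_mul, Complex.exp_ofReal_mul_I_re]

lemma pw_im (t s : ℝ) : (pw t s).im = Real.exp t * Real.sin s := by
  rw [pw, Complex.im_ofReal_mul, Complex.exp_ofReal_mul_I_im]

lemma pw_norm (t s : ℝ) : ‖pw t s‖ = Real.exp t := by
  rw [pw, norm_mul, Complex.norm_exp_ofReal_mul_I, mul_one, Complex.norm_real, Real.norm_eq_abs,
    abs_of_pos (Real.exp_pos t)]

lemma pw_mem (t s : ℝ) (ht : t < 0) : pw t s ∈ PDisc := by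
  refine ⟨?_, ?_⟩ <;> rw [pw_norm]
  · exact Real.exp_pos t
  · exact Real.exp_lt_one_iff.2 ht

lemma pw_per (t : ℝ) : pw t (2 * π) = pw t 0 := by
  rw [pw, pw]
  have : Complex.exp (((2 * π : ℝ) : ℂ) * I) = 1 := by
    push_cast; exact Complex.exp_two_pi_mul_I
  rw [this]; simp

lemma pw_cont : Continuous (fun x : ℝ × ℝ => pw x.1 x.2) := by
  unfold pw; fun_prop

lemma pw_dt (t s : ℝ) : HasDerivAt (fun t => pw t s) (pw t s) t := by
  exact (Real.hasDerivAt_exp t).ofReal_comp.mul_const _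

lemma pw_ds (t s : ℝ) : HasDerivAt (fun s => pw t s) (I * pw t s) s := by
  have h1 : HasDerivAt (fun s : ℝ => ((s : ℝ) : ℂ) * I) I s := by
    simpa using (hasDerivAt_id s).ofReal_comp.mul_const I
  refine (h1.cexp.const_mul ((Real.exp t : ℝ) : ℂ)).congr_deriv ?_
  rw [pw]; ring

lemma pdisc_open : IsOpen PDisc :=
  (isOpen_lt continuous_const continuous_norm).inter (isOpen_lt continuous_norm continuous_const)

lemma pdx_eq (f : ℂ → ℝ) (z : ℂ) (hf : DifferentiableAt ℝ f z) : pdx f z = fderiv ℝ f z 1 := by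
  have h1 : HasDerivAt (fun t : ℝ => z + (t : ℂ)) 1 0 := by
    simpa using (hasDerivAt_id (0:ℝ)).ofReal_comp.const_add z
  have h2 : HasFDerivAt f (fderiv ℝ f z) (z + ((0:ℝ) : ℂ)) := by simpa using hf.hasFDerivAt
  exact (h2.comp_hasDerivAt (0:ℝ) h1).deriv

lemma pdy_eq (f : ℂ → ℝ) (z : ℂ) (hf : DifferentiableAt ℝ f z) : pdy f z = fderiv ℝ f z I := by
  have h1 : HasDerivAt (fun t : ℝ => z + (t : ℂ) * I) I 0 := by
    simpa using ((hasDerivAt_id (0:ℝ)).ofReal_comp.mul_const I).const_add z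
  have h2 : HasFDerivAt f (fderiv ℝ f z) (z + ((0:ℝ) : ℂ) * I) := by simpa using hf.hasFDerivAt
  exact (h2.comp_hasDerivAt (0:ℝ) h1).deriv

lemma fderiv_pd_eq (f : ℂ → ℝ) (z v : ℂ) (hf : DifferentiableAt ℝ f z) :
    fderiv ℝ f z v = v.re * pdx f z + v.im * pdy f z := by
  rw [pdx_eq f z hf, pdy_eq f z hf]
  have : v = v.re • (1:ℂ) + v.im • I := by
    simp [Complex.re_add_im]
  conv_lhs => rw [this]
  rw [map_add, map_smul, map_smul]; simp

/-- `∂f/∂t` in logarithmic polar coordinates. -/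
noncomputable def ft (f : ℂ → ℝ) (t s : ℝ) : ℝ :=
  (pw t s).re * pdx f (pw t s) + (pw t s).im * pdy f (pw t s)

/-- `∂f/∂s` in logarithmic polar coordinates. -/
noncomputable def fs (f : ℂ → ℝ) (t s : ℝ) : ℝ :=
  -(pw t s).im * pdx f (pw t s) + (pw t s).re * pdy f (pw t s)

lemma comp_dt (f : ℂ → ℝ) (t s : ℝ) (hf : DifferentiableAt ℝ f (pw t s)) :
    HasDerivAt (fun t => f (pw t s)) (ft f t s) t := by
  refine (hf.hasFDerivAt.comp_hasDerivAt t (pw_dt t s)).congr_deriv ?_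
  rw [fderiv_pd_eq f _ _ hf, ft]

lemma comp_ds (f : ℂ → ℝ) (t s : ℝ) (hf : DifferentiableAt ℝ f (pw t s)) :
    HasDerivAt (fun s => f (pw t s)) (fs f t s) s := by
  refine (hf.hasFDerivAt.comp_hasDerivAt s (pw_ds t s)).congr_deriv ?_
  rw [fderiv_pd_eq f _ _ hf, fs]
  simp

lemma pdx_c1 (f : ℂ → ℝ) (hf : ContDiffOn ℝ 2 f PDisc) : ContDiffOn ℝ 1 (pdx f) PDisc := by
  have h1 : ContDiffOn ℝ 1 (fderiv ℝ f) PDisc := hf.fderiv_of_isOpen pdisc_open (by norm_num)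
  have h2 : ContDiffOn ℝ 1 (fun z => fderiv ℝ f z 1) PDisc := h1.clm_apply contDiffOn_const
  exact h2.congr fun z hz => pdx_eq f z
    ((hf.differentiableOn (by norm_num)).differentiableAt (pdisc_open.mem_nhds hz))

lemma pdy_c1 (f : ℂ → ℝ) (hf : ContDiffOn ℝ 2 f PDisc) : ContDiffOn ℝ 1 (pdy f) PDisc := by
  have h1 : ContDiffOn ℝ 1 (fderiv ℝ f) PDisc := hf.fderiv_of_isOpen pdisc_open (by norm_num)
  have h2 : ContDiffOn ℝ 1 (fun z => fderiv ℝ f z I) PDisc := h1.clm_apply contDiffOn_const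
  exact h2.congr fun z hz => pdy_eq f z
    ((hf.differentiableOn (by norm_num)).differentiableAt (pdisc_open.mem_nhds hz))

lemma diff_of_c1 (f : ℂ → ℝ) (hf : ContDiffOn ℝ 1 f PDisc) (z : ℂ) (hz : z ∈ PDisc) :
    DifferentiableAt ℝ f z :=
  (hf.differentiableOn (by norm_num)).differentiableAt (pdisc_open.mem_nhds hz)

lemma pdx_cont (f : ℂ → ℝ) (hf : ContDiffOn ℝ 1 f PDisc) : ContinuousOn (pdx f) PDisc := by
  have h1 : ContinuousOn (fderiv ℝ f) PDisc :=
    hf.continuousOn_fderiv_of_isOpen pdisc_open (by norm_num)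
  have h2 : ContinuousOn (fun z => fderiv ℝ f z 1) PDisc := h1.clm_apply continuousOn_const
  exact h2.congr fun z hz => pdx_eq f z (diff_of_c1 f hf z hz)

lemma pdy_cont (f : ℂ → ℝ) (hf : ContDiffOn ℝ 1 f PDisc) : ContinuousOn (pdy f) PDisc := by
  have h1 : ContinuousOn (fderiv ℝ f) PDisc :=
    hf.continuousOn_fderiv_of_isOpen pdisc_open (by norm_num)
  have h2 : ContinuousOn (fun z => fderiv ℝ f z I) PDisc := h1.clm_apply continuousOn_const
  exact h2.congr fun z hz => pdy_eq f z (diff_of_c1 f hf z hz)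

lemma pd_symm (f : ℂ → ℝ) (hf : ContDiffOn ℝ 2 f PDisc) (z : ℂ) (hz : z ∈ PDisc) :
    pdx (pdy f) z = pdy (pdx f) z := by
  have hn := pdisc_open.mem_nhds hz
  have hfd : ∀ y ∈ PDisc, DifferentiableAt ℝ f y := fun y hy =>
    (hf.differentiableOn (by norm_num)).differentiableAt (pdisc_open.mem_nhds hy)
  have h1 : ContDiffOn ℝ 1 (fderiv ℝ f) PDisc := hf.fderiv_of_isOpen pdisc_open (by norm_num)
  have h2 : DifferentiableAt ℝ (fderiv ℝ f) z :=
    (h1.differentiableOn (by norm_num)).differentiableAt hn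
  rw [pdx_eq _ _ (diff_of_c1 _ (pdy_c1 f hf) z hz), pdy_eq _ _ (diff_of_c1 _ (pdx_c1 f hf) z hz)]
  have e1 : pdy f =ᶠ[𝓝 z] fun y => fderiv ℝ f y I := by
    filter_upwards [hn] with y hy using pdy_eq f y (hfd y hy)
  have e2 : pdx f =ᶠ[𝓝 z] fun y => fderiv ℝ f y 1 := by
    filter_upwards [hn] with y hy using pdx_eq f y (hfd y hy)
  rw [e1.fderiv_eq, e2.fderiv_eq]
  have a1 : HasFDerivAt (fun y => fderiv ℝ f y I) ((fderiv ℝ (fderiv ℝ f) z).flip I) z := by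
    simpa using h2.hasFDerivAt.clm_apply (hasFDerivAt_const I z)
  have a2 : HasFDerivAt (fun y => fderiv ℝ f y 1) ((fderiv ℝ (fderiv ℝ f) z).flip 1) z := by
    simpa using h2.hasFDerivAt.clm_apply (hasFDerivAt_const (1:ℂ) z)
  rw [a1.fderiv, a2.fderiv]
  have := (hf.contDiffAt hn).isSymmSndFDerivAt (by simp)
  exact this 1 I

/-- second derivatives -/
noncomputable def ftt (f : ℂ → ℝ) (t s : ℝ) : ℝ :=
  ((pw t s).re * pdx f (pw t s) + (pw t s).re * ft (pdx f) t s)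
    + ((pw t s).im * pdy f (pw t s) + (pw t s).im * ft (pdy f) t s)

noncomputable def fts (f : ℂ → ℝ) (t s : ℝ) : ℝ :=
  (-(pw t s).im * pdx f (pw t s) + (pw t s).re * fs (pdx f) t s)
    + ((pw t s).re * pdy f (pw t s) + (pw t s).im * fs (pdy f) t s)

noncomputable def fss (f : ℂ → ℝ) (t s : ℝ) : ℝ :=
  (-(pw t s).re * pdx f (pw t s) + -(pw t s).im * fs (pdx f) t s)
    + (-(pw t s).im * pdy f (pw t s) + (pw t s).re * fs (pdy f) t s)

lemma re_dt (t s : ℝ) : HasDerivAt (fun t => (pw t s).re) (pw t s).re t := by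
  simp only [pw_re]; exact (Real.hasDerivAt_exp t).mul_const _

lemma im_dt (t s : ℝ) : HasDerivAt (fun t => (pw t s).im) (pw t s).im t := by
  simp only [pw_im]; exact (Real.hasDerivAt_exp t).mul_const _

lemma re_ds (t s : ℝ) : HasDerivAt (fun s => (pw t s).re) (-(pw t s).im) s := by
  simp only [pw_re, pw_im]
  exact ((Real.hasDerivAt_cos s).const_mul _).congr_deriv (by ring)

lemma im_ds (t s : ℝ) : HasDerivAt (fun s => (pw t s).im) (pw t s).re s := by
  simp only [pw_re, pw_im]
  exact ((Real.hasDerivAt_sin s).const_mul _)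

section
variable (f : ℂ → ℝ) (hf : ContDiffOn ℝ 2 f PDisc) (t : ℝ) (ht : t < 0) (s : ℝ)

lemma ft_dt (f : ℂ → ℝ) (hf : ContDiffOn ℝ 2 f PDisc) (t : ℝ) (ht : t < 0) (s : ℝ) :
    HasDerivAt (fun t => ft f t s) (ftt f t s) t :=
  ((re_dt t s).fun_mul (comp_dt _ t s (diff_of_c1 _ (pdx_c1 f hf) _ (pw_mem t s ht)))).fun_add
    ((im_dt t s).fun_mul (comp_dt _ t s (diff_of_c1 _ (pdy_c1 f hf) _ (pw_mem t s ht))))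

lemma ft_ds (f : ℂ → ℝ) (hf : ContDiffOn ℝ 2 f PDisc) (t : ℝ) (ht : t < 0) (s : ℝ) :
    HasDerivAt (fun s => ft f t s) (fts f t s) s :=
  ((re_ds t s).fun_mul (comp_ds _ t s (diff_of_c1 _ (pdx_c1 f hf) _ (pw_mem t s ht)))).fun_add
    ((im_ds t s).fun_mul (comp_ds _ t s (diff_of_c1 _ (pdy_c1 f hf) _ (pw_mem t s ht))))

lemma fs_ds (f : ℂ → ℝ) (hf : ContDiffOn ℝ 2 f PDisc) (t : ℝ) (ht : t < 0) (s : ℝ) :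
    HasDerivAt (fun s => fs f t s) (fss f t s) s :=
  ((im_ds t s).fun_neg.fun_mul
    (comp_ds _ t s (diff_of_c1 _ (pdx_c1 f hf) _ (pw_mem t s ht)))).fun_add
    ((re_ds t s).fun_mul (comp_ds _ t s (diff_of_c1 _ (pdy_c1 f hf) _ (pw_mem t s ht))))

lemma fs_dt (f : ℂ → ℝ) (hf : ContDiffOn ℝ 2 f PDisc) (t : ℝ) (ht : t < 0) (s : ℝ) :
    HasDerivAt (fun t => fs f t s) (fts f t s) t := by
  refine (((im_dt t s).fun_neg.fun_mul
    (comp_dt _ t s (diff_of_c1 _ (pdx_c1 f hf) _ (pw_mem t s ht)))).fun_add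
    ((re_dt t s).fun_mul
      (comp_dt _ t s (diff_of_c1 _ (pdy_c1 f hf) _ (pw_mem t s ht))))).congr_deriv ?_
  simp only [fts, ft, fs, pd_symm f hf _ (pw_mem t s ht)]
  ring

lemma f_lap (f : ℂ → ℝ) (hf : ContDiffOn ℝ 2 f PDisc) (t : ℝ) (ht : t < 0) (s : ℝ) :
    ftt f t s + fss f t s = Real.exp t ^ 2 * lap f (pw t s) := by
  have : Real.exp t ^ 2 = (pw t s).re ^ 2 + (pw t s).im ^ 2 := by
    rw [← pw_norm t s, Complex.sq_norm, Complex.normSq_apply]; ring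
  rw [this]
  simp only [ftt, fss, ft, fs, lap, pd_symm f hf _ (pw_mem t s ht)]
  ring

end

lemma comp_cont (g : ℂ → ℝ) (hg : ContinuousOn g PDisc) :
    ContinuousOn (fun x : ℝ × ℝ => g (pw x.1 x.2)) {x | x.1 < 0} :=
  hg.comp pw_cont.continuousOn fun x hx => pw_mem x.1 x.2 hx

lemma re_cont : ContinuousOn (fun x : ℝ × ℝ => (pw x.1 x.2).re) {x | x.1 < 0} :=
  (Complex.continuous_re.comp pw_cont).continuousOn

lemma im_cont : ContinuousOn (fun x : ℝ × ℝ => (pw x.1 x.2).im) {x | x.1 < 0} :=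
  (Complex.continuous_im.comp pw_cont).continuousOn

lemma ft_cont (f : ℂ → ℝ) (hf : ContDiffOn ℝ 1 f PDisc) :
    ContinuousOn (fun x : ℝ × ℝ => ft f x.1 x.2) {x | x.1 < 0} :=
  (re_cont.mul (comp_cont _ (pdx_cont f hf))).add (im_cont.mul (comp_cont _ (pdy_cont f hf)))

lemma fs_cont (f : ℂ → ℝ) (hf : ContDiffOn ℝ 1 f PDisc) :
    ContinuousOn (fun x : ℝ × ℝ => fs f x.1 x.2) {x | x.1 < 0} :=
  (im_cont.neg.mul (comp_cont _ (pdx_cont f hf))).add (re_cont.mul (comp_cont _ (pdy_cont f hf)))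

lemma ftt_cont (f : ℂ → ℝ) (hf : ContDiffOn ℝ 2 f PDisc) :
    ContinuousOn (fun x : ℝ × ℝ => ftt f x.1 x.2) {x | x.1 < 0} := by
  have hf1 : ContDiffOn ℝ 1 f PDisc := hf.of_le (by norm_num)
  exact ((re_cont.mul (comp_cont _ (pdx_cont f hf1))).add
      (re_cont.mul (ft_cont _ (pdx_c1 f hf)))).add
    ((im_cont.mul (comp_cont _ (pdy_cont f hf1))).add (im_cont.mul (ft_cont _ (pdy_c1 f hf))))

lemma fts_cont (f : ℂ → ℝ) (hf : ContDiffOn ℝ 2 f PDisc) :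
    ContinuousOn (fun x : ℝ × ℝ => fts f x.1 x.2) {x | x.1 < 0} := by
  have hf1 : ContDiffOn ℝ 1 f PDisc := hf.of_le (by norm_num)
  exact ((im_cont.neg.mul (comp_cont _ (pdx_cont f hf1))).add
      (re_cont.mul (fs_cont _ (pdx_c1 f hf)))).add
    ((re_cont.mul (comp_cont _ (pdy_cont f hf1))).add (im_cont.mul (fs_cont _ (pdy_c1 f hf))))

/-- The conformal factor has a one-sided bound on every closed punctured ball. -/
lemma vBound (u : ℂ → ℝ) (hu : ContinuousOn u PDisc) (β c : ℝ)
    (hconical : Tendsto (fun z => u z + β * Real.log ‖z‖) (𝓝[PDisc] 0) (𝓝 c))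
    (T : ℝ) (hT : T < 0) : ∃ V : ℝ, ∀ t ≤ T, ∀ s, u (pw t s) + β * t ≤ V := by
  have h1 := hconical.eventually (gt_mem_nhds (lt_add_one c))
  rw [eventually_nhdsWithin_iff, Metric.eventually_nhds_iff] at h1
  obtain ⟨δ, hδ, h2⟩ := h1
  have hcomp : IsCompact (Metric.closedBall (0:ℂ) (Real.exp T) ∩ {z | δ ≤ ‖z‖}) :=
    (isCompact_closedBall _ _).inter_right (isClosed_le continuous_const continuous_norm)
  have hsub : (Metric.closedBall (0:ℂ) (Real.exp T) ∩ {z | δ ≤ ‖z‖}) ⊆ PDisc := by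
    rintro z ⟨hz1, hz2⟩
    rw [mem_closedBall_zero_iff] at hz1
    exact ⟨hδ.trans_le hz2, hz1.trans_lt (Real.exp_lt_one_iff.2 hT)⟩
  have hc : ContinuousOn (fun z => u z + β * Real.log ‖z‖)
      (Metric.closedBall (0:ℂ) (Real.exp T) ∩ {z | δ ≤ ‖z‖}) := by
    refine (hu.mono hsub).add (continuousOn_const.mul (ContinuousOn.log continuous_norm.continuousOn ?_))
    intro z hz
    exact (hsub hz).1.ne'
  obtain ⟨C, hC⟩ := hcomp.exists_bound_of_continuousOn hc
  refine ⟨max (c + 1) C, fun t ht s => ?_⟩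
  have hlog : Real.log ‖pw t s‖ = t := by rw [pw_norm, Real.log_exp]
  by_cases hd : ‖pw t s‖ < δ
  · have := h2 (y := pw t s) (by rwa [dist_zero_right]) (pw_mem t s (ht.trans_lt hT))
    rw [hlog] at this
    exact this.le.trans (le_max_left _ _)
  · have := hC (pw t s) ⟨by
      rw [mem_closedBall_zero_iff, pw_norm]; exact Real.exp_le_exp.2 ht, not_lt.1 hd⟩
    rw [hlog] at this
    exact (le_abs_self _).trans (this.trans (le_max_right _ _))

theorem stmt16 (a : ℝ) (h u : ℂ → ℝ)
    (hh : ContDiffOn ℝ 2 h PDisc) (hu : ContDiffOn ℝ 2 u PDisc)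
    (hharm : ∀ z ∈ PDisc, lap h z = 0)
    (hpde : ∀ z ∈ PDisc, lap u z
      = ((pdx h z + a * z.im / ‖z‖ ^ 2) ^ 2 + (pdy h z - a * z.re / ‖z‖ ^ 2) ^ 2)
        * Real.exp (2 * u z))
    (N : ℤ) (G : ℂ → ℂ)
    (hGhol : DifferentiableOn ℂ G (Metric.ball (0 : ℂ) 1)) (hG0 : G 0 ≠ 0)
    (hord : ∀ z ∈ PDisc, (pdx h z : ℂ) - (pdy h z : ℂ) * Complex.I = z ^ N * G z)
    (n : ℤ) (hn : n = if a = 0 then N else min (-1) N)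
    (β : ℤ) (hβ : β < n + 1) (c : ℝ)
    (hconical : Tendsto (fun z => u z + (β : ℝ) * Real.log ‖z‖) (𝓝[PDisc] 0) (𝓝 c))
    -- the parallel transport Φ_r along the circle of radius r
    (Φ : ℝ → ℝ → Matrix (Fin 2) (Fin 2) ℝ)
    (hΦ0 : ∀ r ∈ Ioo (0 : ℝ) 1, Φ r 0 = 1)
    (hΦode : ∀ r ∈ Ioo (0 : ℝ) 1, ∀ s : ℝ, ∀ i j : Fin 2,
      HasDerivAt (fun s' => Φ r s' i j)
        ((-Mθ h u a ((r : ℂ) * Complex.exp ((s : ℝ) * Complex.I)) * Φ r s) i j) s) :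
    ∀ r ∈ Ioo (0 : ℝ) 1,
      Φ r (2 * π) = ((-1 : ℝ) ^ β) • (1 : Matrix (Fin 2) (Fin 2) ℝ) := by
  intro r hr
  set T := Real.log r with hTdef
  have hexpT : Real.exp T = r := Real.exp_log hr.1
  have hT : T < 0 := Real.log_neg hr.1 hr.2
  have hu1 : ContDiffOn ℝ 1 u PDisc := hu.of_le (by norm_num)
  have hh1 : ContDiffOn ℝ 1 h PDisc := hh.of_le (by norm_num)
  have hβN : β ≤ N := by
    have : n ≤ N := by
      rw [hn]; split_ifs
      · exact le_rfl
      · exact min_le_right _ _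
    omega
  have hβa : a ≠ 0 → β ≤ -1 := by
    intro ha
    rw [if_neg ha] at hn
    have : n ≤ -1 := by rw [hn]; exact min_le_left _ _
    omega
  obtain ⟨V, hV⟩ := vBound u hu1.continuousOn β c hconical T hT
  obtain ⟨B, hB⟩ : ∃ B : ℝ, ∀ z ∈ Metric.closedBall (0:ℂ) r, ‖G z‖ ≤ B :=
    (isCompact_closedBall (0:ℂ) r).exists_bound_of_continuousOn
      (hGhol.continuousOn.mono (Metric.closedBall_subset_ball hr.2))
  have hB0 : 0 ≤ B := (norm_nonneg _).trans (hB 0 (by simp [hr.1.le]))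
  have hzp : ∀ (k : ℤ) (t : ℝ), Real.exp t ^ k = Real.exp (k * t) := by
    intro k t
    rw [mul_comm, Real.exp_mul, Real.rpow_intCast]
  -- the basic bound
  have hkey : ∀ t ≤ T, ∀ s, ∀ x : ℝ, |x| ≤ ‖pw t s * (((pdx h (pw t s) : ℝ) : ℂ)
      - (pdy h (pw t s) : ℝ) * I)‖ + |a| →
      |Real.exp (u (pw t s)) * x| ≤ (Real.exp V * (B + |a|) + 1) * Real.exp t := by
    intro t ht s x hx
    have ht0 : t < 0 := ht.trans_lt hT
    rw [hord _ (pw_mem t s ht0), norm_mul, norm_mul, norm_zpow, pw_norm,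
      hzp N t] at hx
    have hGB : ‖G (pw t s)‖ ≤ B := hB _ (by
      rw [mem_closedBall_zero_iff, pw_norm, ← hexpT]; exact Real.exp_le_exp.2 ht)
    have hβt : ∀ k : ℤ, β + 1 ≤ k → Real.exp (-(β * t)) * Real.exp (k * t) ≤ Real.exp t := by
      intro k hk
      rw [← Real.exp_add, Real.exp_le_exp]
      have : (β : ℝ) + 1 ≤ k := by exact_mod_cast hk
      nlinarith
    have e1 : Real.exp (u (pw t s)) ≤ Real.exp V * Real.exp (-(β * t)) := by
      rw [← Real.exp_add, Real.exp_le_exp]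
      have := hV t ht s
      linarith
    have e2 : Real.exp (-(β * t)) * (Real.exp t * (Real.exp (N * t) * ‖G (pw t s)‖))
        ≤ Real.exp t * B := by
      have e3 := hβt (N + 1) (by omega)
      have e4 : Real.exp (((N + 1 : ℤ) : ℝ) * t) = Real.exp t * Real.exp (N * t) := by
        rw [← Real.exp_add]; push_cast; ring_nf
      rw [e4] at e3
      have := mul_le_mul e3 hGB (norm_nonneg _) (Real.exp_pos t).le
      linarith
    have e5 : Real.exp (-(β * t)) * |a| ≤ Real.exp t * |a| := by
      by_cases ha : a = 0
      · simp [ha]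
      · have := hβt 0 (by have := hβa ha; omega)
        simp only [Int.cast_zero, zero_mul, Real.exp_zero, mul_one] at this
        exact mul_le_mul_of_nonneg_right this (abs_nonneg _)
    rw [abs_mul, abs_of_pos (Real.exp_pos _)]
    calc Real.exp (u (pw t s)) * |x| ≤ (Real.exp V * Real.exp (-(β * t))) *
          (Real.exp t * (Real.exp (N * t) * ‖G (pw t s)‖) + |a|) :=
          mul_le_mul e1 hx (abs_nonneg _) (by positivity)
      _ = Real.exp V * (Real.exp (-(β * t)) * (Real.exp t * (Real.exp (N * t) * ‖G (pw t s)‖))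
          + Real.exp (-(β * t)) * |a|) := by ring
      _ ≤ Real.exp V * (Real.exp t * B + Real.exp t * |a|) := by gcongr
      _ ≤ _ := by nlinarith [Real.exp_pos t]
  have hmem : ∀ t < 0, Real.exp t ∈ Ioo (0:ℝ) 1 := fun t ht => ⟨Real.exp_pos t, Real.exp_lt_one_iff.2 ht⟩
  have hfin := coreHol (fun t s => u (pw t s)) (ft u) (fs u) (ftt u) (fts u) (fss u)
    (ft h) (fun t s => fs h t s - a) (ftt h) (fts h)
    (fun t ht s => comp_dt u t s (diff_of_c1 u hu1 _ (pw_mem t s ht)))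
    (fun t ht s => comp_ds u t s (diff_of_c1 u hu1 _ (pw_mem t s ht)))
    (ft_dt u hu) (ft_ds u hu) (fs_dt u hu) (fs_ds u hu) (ft_dt h hh) (ft_ds h hh)
    (fun t ht s => (fs_dt h hh t ht s).sub_const a)
    (fun t ht s => ((fs_ds h hh t ht s).sub_const a).congr_deriv (by
      have := f_lap h hh t ht s
      rw [hharm _ (pw_mem t s ht), mul_zero] at this
      linarith))
    (comp_cont u hu1.continuousOn) (ft_cont u hu1) (ftt_cont u hu) (fts_cont u hu)
    (ft_cont h hh1) ((fs_cont h hh1).sub continuousOn_const) (ftt_cont h hh) (fts_cont h hh)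
    ?_ (fun t => by simp only [pw_per]) (fun t => by simp only [ft, pw_per])
    (fun t => by simp only [fs, pw_per]) (fun t => by simp only [ft, pw_per])
    (fun t => by simp only [fs, pw_per]) β c ?_ T hT (Real.exp V * (B + |a|) + 1) (by positivity)
    ?_ ?_ (fun t s => Φ (Real.exp t) s) (fun t ht => hΦ0 _ (hmem t ht)) ?_
  · rw [← hexpT]; exact hfin
  · intro t ht s
    rw [f_lap u hu t ht s, hpde _ (pw_mem t s ht), pw_norm, ← mul_assoc]
    congr 1
    have hsq : (pw t s).re ^ 2 + (pw t s).im ^ 2 = Real.exp t ^ 2 := by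
      rw [← pw_norm t s, Complex.sq_norm, Complex.normSq_apply]; ring
    simp only [ft, fs]
    have hE : Real.exp t ≠ 0 := (Real.exp_pos t).ne'
    generalize Real.exp t = E at *
    field_simp
    rw [← hsq]
    ring
  · intro ε hε
    have h1 := hconical.eventually (Metric.closedBall_mem_nhds c hε)
    rw [eventually_nhdsWithin_iff, Metric.eventually_nhds_iff] at h1
    obtain ⟨δ, hδ, h2⟩ := h1
    refine ⟨min (-1) (Real.log δ), by simp, fun t ht s => ?_⟩
    have ht0 : t < 0 := by have := min_le_left (-1) (Real.log δ); linarith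
    have htδ : t < Real.log δ := ht.trans_le (min_le_right _ _)
    have := h2 (y := pw t s) (by
      rw [dist_zero_right, pw_norm, ← Real.lt_log_iff_exp_lt hδ]; exact htδ) (pw_mem t s ht0)
    rw [pw_norm, Real.log_exp, Real.dist_eq] at this
    exact this
  · intro t ht s
    refine hkey t ht s _ ?_
    have : ft h t s = (pw t s * (((pdx h (pw t s) : ℝ) : ℂ) - (pdy h (pw t s) : ℝ) * I)).re := by
      simp [ft]
    rw [this]
    have := Complex.abs_re_le_norm (pw t s * (((pdx h (pw t s) : ℝ) : ℂ)
      - (pdy h (pw t s) : ℝ) * I))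
    linarith [abs_nonneg a]
  · intro t ht s
    refine hkey t ht s _ ?_
    have : fs h t s = -(pw t s * (((pdx h (pw t s) : ℝ) : ℂ) - (pdy h (pw t s) : ℝ) * I)).im := by
      simp [fs]
    have h3 := Complex.abs_im_le_norm (pw t s * (((pdx h (pw t s) : ℝ) : ℂ)
      - (pdy h (pw t s) : ℝ) * I))
    refine (abs_sub _ _).trans ?_
    rw [this, abs_neg]
    linarith
  · intro t ht s i j
    have h1 := hΦode _ (hmem t ht) s i j
    refine h1.congr_deriv ?_
    have : Mθ h u a ((Real.exp t : ℝ) * Complex.exp ((s : ℝ) * Complex.I))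
        = !![(Real.exp (u (pw t s)) * (fs h t s - a) - fs u t s) / 2,
            (ft u t s - Real.exp (u (pw t s)) * ft h t s) / 2;
          (-ft u t s - Real.exp (u (pw t s)) * ft h t s) / 2,
            (-(Real.exp (u (pw t s)) * (fs h t s - a)) - fs u t s) / 2] := by
      change Mθ h u a (pw t s) = _
      have hE : Real.exp t ≠ 0 := (Real.exp_pos t).ne'
      have hr : ∀ f : ℂ → ℝ, pdr f (pw t s) = ft f t s / Real.exp t := by
        intro f; rw [pdr, pw_norm, ft]
      have hθ : ∀ f : ℂ → ℝ, pdθ f (pw t s) = fs f t s := fun f => rfl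
      simp only [Mθ, ω11θ, ω11r, ω22r, ω22θ, hr, hθ, pw_norm]
      generalize Real.exp t = E at *
      ext i j
      fin_cases i <;> fin_cases j <;> simp <;> field_simp <;> ring
    rw [this]
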